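/- arXiv:2112.04590 — 3 statements merged into one kernel-verified Lean document; each statement's English description precedes it below -/
import Mathlib

section
/- For every convex potential function φ, every noise rate η ∈ (0, 1/2), and every finite-covariance probability distribution D on ℝ^d × {-1,1}, the noisy risk function v ↦ P_{φ,D̄_η}(v) = E_{(x,y)~D̄_η}[φ(y (v·x))] attains a minimum, i.e., there exists v* ∈ ℝ^d with P_{φ,D̄_η}(v*) ≤ P_{φ,D̄_η}(v) for all v ∈ ℝ^d. -/
/-!
The noisy risk `F` is lower semicontinuous by Fatou's lemma and is invariant under translation by
the subspace `N` of those `u` with `⟪u, x⟫ = 0` almost surely (`nullDirections`). It therefore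
suffices to minimize over `Nᗮ`, and there `F` is coercive:

* Label noise makes the loss two-sided. The tangent line at `0` gives `φ (-t) ≥ |φ'(0)| t` for `t ≥ 0`,
  and both signs of the margin carry weight at least `η`, so `F v ≥ η |φ'(0)| E|⟪v, x⟫|`.
* `v ↦ E|⟪v, x⟫|` is lower semicontinuous and nonzero on the unit sphere of `Nᗮ`, so by
  compactness and homogeneity it dominates `m ‖v‖` on `Nᗮ` for some `m > 0`
  (`exists_pos_mul_norm_le`).

Hence `F v ≥ F 0` for `v ∈ Nᗮ` outside a large ball, and `F` attains its minimum on the compact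
intersection of that ball with `Nᗮ`. Infinite values of `F` or of the first moment do no harm, since
everything takes place in `ℝ≥0∞`.
-/

open MeasureTheory Filter
open scoped RealInnerProductSpace ENNReal

/-- A convex potential function in the sense of Long and Servedio:
`φ` is `C¹`, convex, nonincreasing, has `φ'(0) < 0`, and `φ(x) → 0` as `x → ∞`. -/
structure IsConvexPotential (φ : ℝ → ℝ) : Prop where
  differentiable : Differentiable ℝ φ
  continuous_deriv : Continuous (deriv φ)
  convexOn : ConvexOn ℝ Set.univ φ
  antitone : Antitone φ
  deriv_zero_neg : deriv φ 0 < 0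
  tendsto_zero : Filter.Tendsto φ Filter.atTop (nhds 0)

/-- The `φ`-risk of the linear classifier `v` under the `η`-RCN corrupted version of `D`:
`E_{(x,y)~D̄_η}[φ(y (v·x))] = E_{(x,y)~D}[(1-η) φ(y (v·x)) + η φ(-y (v·x))]`.
Since a convex potential function is nonnegative, we take the (extended-real-valued)
lower integral. -/
noncomputable def noisyRisk {d : ℕ} (φ : ℝ → ℝ) (η : ℝ)
    (D : Measure (EuclideanSpace ℝ (Fin d) × ℝ)) (v : EuclideanSpace ℝ (Fin d)) : ℝ≥0∞ :=
  ∫⁻ p, ENNReal.ofReal ((1 - η) * φ (p.2 * ⟪v, p.1⟫) + η * φ (-p.2 * ⟪v, p.1⟫)) ∂D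

/-- Fatou's lemma, phrased as lower semicontinuity of a parametrized lower integral. -/
lemma lowerSemicontinuous_lintegral_param {E Ω : Type*} [TopologicalSpace E]
    [FirstCountableTopology E] [MeasurableSpace Ω] (μ : Measure Ω) (f : E → Ω → ℝ≥0∞)
    (hm : ∀ v, Measurable (f v)) (hc : ∀ p, Continuous fun v => f v p) :
    LowerSemicontinuous fun v => ∫⁻ p, f v p ∂μ := by
  rw [lowerSemicontinuous_iff_le_liminf]
  intro v
  refine le_trans (le_of_eq ?_) (lintegral_liminf_le hm)
  exact lintegral_congr fun p => ((hc p).tendsto v).liminf_eq.symm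

lemma IsConvexPotential.nonneg {φ : ℝ → ℝ} (hφ : IsConvexPotential φ) (t : ℝ) : 0 ≤ φ t :=
  hφ.antitone.le_of_tendsto hφ.tendsto_zero t

/-- The tangent line at `0`, with the nonnegative constant term `φ 0` dropped. -/
lemma IsConvexPotential.linear_le {φ : ℝ → ℝ} (hφ : IsConvexPotential φ) {t : ℝ} (ht : 0 ≤ t) :
    -deriv φ 0 * t ≤ φ (-t) := by
  rcases ht.eq_or_lt with rfl | ht
  · simpa using hφ.nonneg 0
  · have h := hφ.convexOn.slope_le_deriv (Set.mem_univ (-t)) (Set.mem_univ 0) (by linarith)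
      (hφ.differentiable 0)
    rw [slope_def_field, div_le_iff₀ (by linarith)] at h
    have := hφ.nonneg 0
    linarith

/-- The noisy loss grows at least linearly in the margin, in both directions: the side on which
`φ` is large has weight at least `η`. -/
lemma IsConvexPotential.noisy_lower_bound {φ : ℝ → ℝ} (hφ : IsConvexPotential φ) {η : ℝ}
    (hη : η ∈ Set.Ioo (0 : ℝ) (1 / 2)) (z : ℝ) :
    η * -deriv φ 0 * |z| ≤ (1 - η) * φ z + η * φ (-z) := by
  obtain ⟨h0, h1⟩ := hη
  have hz := hφ.nonneg z
  have hz' := hφ.nonneg (-z)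
  rcases le_total 0 z with h | h
  · rw [abs_of_nonneg h]
    nlinarith [hφ.linear_le h]
  · rw [abs_of_nonpos h]
    have := hφ.linear_le (t := -z) (by linarith)
    rw [neg_neg] at this
    nlinarith

/-- The subspace of directions along which the features vanish almost surely. -/
def nullDirections {d : ℕ} (D : Measure (EuclideanSpace ℝ (Fin d) × ℝ)) :
    Submodule ℝ (EuclideanSpace ℝ (Fin d)) where
  carrier := {u | ∀ᵐ p ∂D, ⟪u, p.1⟫ = 0}
  zero_mem' := by simp
  add_mem' := by
    intro a b ha hb
    change ∀ᵐ p ∂D, ⟪a + b, p.1⟫ = 0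
    filter_upwards [ha, hb] with p h1 h2
    rw [inner_add_left, h1, h2, add_zero]
  smul_mem' := by
    intro c a ha
    change ∀ᵐ p ∂D, ⟪c • a, p.1⟫ = 0
    filter_upwards [ha] with p h
    rw [real_inner_smul_left, h, mul_zero]

lemma mem_nullDirections {d : ℕ} {D : Measure (EuclideanSpace ℝ (Fin d) × ℝ)}
    {u : EuclideanSpace ℝ (Fin d)} : u ∈ nullDirections D ↔ ∀ᵐ p ∂D, ⟪u, p.1⟫ = 0 := Iff.rfl

/-- Coercivity of the first absolute moment on the orthogonal complement of the null directions. -/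
lemma exists_pos_mul_norm_le {d : ℕ} (D : Measure (EuclideanSpace ℝ (Fin d) × ℝ)) :
    ∃ m : ℝ, 0 < m ∧ ∀ u ∈ (nullDirections D)ᗮ,
      ENNReal.ofReal (m * ‖u‖) ≤ ∫⁻ p, ‖⟪u, p.1⟫‖ₑ ∂D := by
  set K := (nullDirections D)ᗮ with hK
  set G : EuclideanSpace ℝ (Fin d) → ℝ≥0∞ := fun u => ∫⁻ p, ‖⟪u, p.1⟫‖ₑ ∂D with hG
  have hGlsc : LowerSemicontinuous G :=
    lowerSemicontinuous_lintegral_param D _ (fun v => by fun_prop) (fun p => by fun_prop)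
  have hGsmul : ∀ (c : ℝ) u, G (c • u) = ‖c‖ₑ * G u := by
    intro c u
    simp only [hG, real_inner_smul_left, enorm_mul]
    rw [lintegral_const_mul _ (by fun_prop)]
  have hGpos : ∀ u ∈ K, u ≠ 0 → G u ≠ 0 := by
    intro u hu hne h
    rw [hG, lintegral_eq_zero_iff (by fun_prop)] at h
    have hN : u ∈ nullDirections D := by
      rw [mem_nullDirections]
      filter_upwards [h] with p hp using by simpa using hp
    exact hne (inner_self_eq_zero.mp ((Submodule.mem_orthogonal _ u).mp hu u hN))
  set S : Set (EuclideanSpace ℝ (Fin d)) := Metric.sphere 0 1 ∩ K with hS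
  have hScomp : IsCompact S := (isCompact_sphere 0 1).inter_right K.closed_of_finiteDimensional
  -- The sphere is empty when `K = 0`; any positive constant then works.
  have hmin : ∃ m : ℝ, 0 < m ∧ ∀ u ∈ S, ENNReal.ofReal m ≤ G u := by
    rcases S.eq_empty_or_nonempty with he | hne
    · exact ⟨1, one_pos, by simp [he]⟩
    · obtain ⟨a, ha, hamin⟩ :=
        LowerSemicontinuousOn.exists_isMinOn hne hScomp (hGlsc.lowerSemicontinuousOn S)
      have ha0 : a ≠ 0 := by
        rintro rfl
        simpa using ha.1
      have hpos : 0 < min (G a) 1 := lt_min (pos_iff_ne_zero.mpr (hGpos a ha.2 ha0)) one_pos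
      -- The minimum of `G` may be infinite, hence the truncation at `1`.
      have hfin : min (G a) 1 ≠ ∞ := ne_top_of_le_ne_top ENNReal.one_ne_top (min_le_right _ _)
      refine ⟨(min (G a) 1).toReal, ENNReal.toReal_pos hpos.ne' hfin, fun u hu => ?_⟩
      rw [ENNReal.ofReal_toReal hfin]
      exact (min_le_left _ _).trans (hamin hu)
  obtain ⟨m, hm, hle⟩ := hmin
  refine ⟨m, hm, fun u hu => ?_⟩
  rcases eq_or_ne u 0 with rfl | hne
  · simp
  · have hn : ‖u‖ ≠ 0 := norm_ne_zero_iff.mpr hne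
    have hmem : ‖u‖⁻¹ • u ∈ S :=
      ⟨by simp [norm_smul, hn], K.smul_mem _ hu⟩
    calc ENNReal.ofReal (m * ‖u‖) = ‖(‖u‖ : ℝ)‖ₑ * ENNReal.ofReal m := by
          rw [mul_comm, ENNReal.ofReal_mul (norm_nonneg u),
            Real.enorm_of_nonneg (norm_nonneg u)]
      _ ≤ ‖(‖u‖ : ℝ)‖ₑ * G (‖u‖⁻¹ • u) := by gcongr; exact hle _ hmem
      _ = G u := by rw [← hGsmul, smul_inv_smul₀ hn]

lemma noisyRisk_zero {d : ℕ} (φ : ℝ → ℝ) (η : ℝ) (D : Measure (EuclideanSpace ℝ (Fin d) × ℝ))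
    [IsProbabilityMeasure D] : noisyRisk φ η D 0 = ENNReal.ofReal (φ 0) := by
  simp only [noisyRisk, inner_zero_left, mul_zero, lintegral_const, measure_univ, mul_one]
  congr 1
  ring

lemma noisyRisk_add_null {d : ℕ} (φ : ℝ → ℝ) (η : ℝ)
    (D : Measure (EuclideanSpace ℝ (Fin d) × ℝ)) {n : EuclideanSpace ℝ (Fin d)}
    (hn : n ∈ nullDirections D) (v : EuclideanSpace ℝ (Fin d)) :
    noisyRisk φ η D (n + v) = noisyRisk φ η D v := by
  refine lintegral_congr_ae ?_
  filter_upwards [mem_nullDirections.mp hn] with p hp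
  rw [inner_add_left, hp, zero_add]

lemma noisyRisk_lowerSemicontinuous {d : ℕ} {φ : ℝ → ℝ} (hφ : Continuous φ) (η : ℝ)
    (D : Measure (EuclideanSpace ℝ (Fin d) × ℝ)) : LowerSemicontinuous (noisyRisk φ η D) :=
  lowerSemicontinuous_lintegral_param D _
    (fun v => by
      have : Measurable φ := hφ.measurable
      fun_prop)
    (fun p => ENNReal.continuous_ofReal.comp (by fun_prop))

lemma noisyRisk_lower_bound {d : ℕ} {φ : ℝ → ℝ} (hφ : IsConvexPotential φ)
    {η : ℝ} (hη : η ∈ Set.Ioo (0 : ℝ) (1 / 2)) (D : Measure (EuclideanSpace ℝ (Fin d) × ℝ))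
    (hlab : ∀ᵐ p ∂D, p.2 = 1 ∨ p.2 = -1) (v : EuclideanSpace ℝ (Fin d)) :
    ENNReal.ofReal (η * -deriv φ 0) * ∫⁻ p, ‖⟪v, p.1⟫‖ₑ ∂D ≤ noisyRisk φ η D v := by
  have hc : 0 ≤ η * -deriv φ 0 := mul_nonneg hη.1.le (neg_nonneg.mpr hφ.deriv_zero_neg.le)
  rw [← lintegral_const_mul _ (by fun_prop)]
  refine lintegral_mono_ae ?_
  filter_upwards [hlab] with p hp
  rw [Real.enorm_eq_ofReal_abs, ← ENNReal.ofReal_mul hc]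
  refine ENNReal.ofReal_le_ofReal ?_
  have habs : |p.2 * ⟪v, p.1⟫| = |⟪v, p.1⟫| := by
    rcases hp with h | h <;> simp [h]
  rw [neg_mul p.2, ← habs]
  exact hφ.noisy_lower_bound hη _

/-- For every convex potential function `φ`, noise rate `η ∈ (0,1/2)`, and finite-covariance
probability distribution `D` on `ℝ^d × {-1,1}`, the noisy risk attains a minimum. -/
theorem noisyRisk_exists_min {d : ℕ} (φ : ℝ → ℝ) (hφ : IsConvexPotential φ)
    (η : ℝ) (hη : η ∈ Set.Ioo (0 : ℝ) (1/2))
    (D : Measure (EuclideanSpace ℝ (Fin d) × ℝ)) [IsProbabilityMeasure D]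
    (hlab : ∀ᵐ p ∂D, p.2 = 1 ∨ p.2 = -1)
    (hcov : ∀ u : EuclideanSpace ℝ (Fin d), Integrable (fun p => ⟪u, p.1⟫ ^ 2) D) :
    ∃ v : EuclideanSpace ℝ (Fin d), ∀ w : EuclideanSpace ℝ (Fin d),
      noisyRisk φ η D v ≤ noisyRisk φ η D w := by
  obtain ⟨m, hm, hcoer⟩ := exists_pos_mul_norm_le D
  set c := η * -deriv φ 0 with hc
  have hcpos : 0 < c := mul_pos hη.1 (neg_pos.mpr hφ.deriv_zero_neg)
  set K := (nullDirections D)ᗮ with hK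
  -- `F 0 = φ 0` while `F u ≥ c m ‖u‖` on `K`, so nothing outside this radius beats the origin.
  set R := φ 0 / (c * m) with hR
  have hRnn : 0 ≤ R := div_nonneg (hφ.nonneg 0) (mul_pos hcpos hm).le
  have hcomp : IsCompact (Metric.closedBall (0 : EuclideanSpace ℝ (Fin d)) R ∩ K) :=
    (isCompact_closedBall 0 R).inter_right K.closed_of_finiteDimensional
  have h0mem : (0 : EuclideanSpace ℝ (Fin d)) ∈ Metric.closedBall 0 R ∩ (K : Set _) :=
    ⟨Metric.mem_closedBall_self hRnn, K.zero_mem⟩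
  obtain ⟨v, -, hv⟩ := LowerSemicontinuousOn.exists_isMinOn ⟨0, h0mem⟩ hcomp
    ((noisyRisk_lowerSemicontinuous hφ.differentiable.continuous η D).lowerSemicontinuousOn _)
  refine ⟨v, fun w => ?_⟩
  obtain ⟨n, hn, u, hu, rfl⟩ := (nullDirections D).exists_add_mem_mem_orthogonal w
  rw [noisyRisk_add_null φ η D hn]
  rcases le_or_gt ‖u‖ R with hle | hgt
  · exact hv ⟨mem_closedBall_zero_iff.mpr hle, hu⟩
  · calc noisyRisk φ η D v ≤ noisyRisk φ η D 0 := hv h0mem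
      _ = ENNReal.ofReal (φ 0) := noisyRisk_zero φ η D
      _ ≤ ENNReal.ofReal (c * (m * ‖u‖)) := by
          refine ENNReal.ofReal_le_ofReal ?_
          rw [hR, div_lt_iff₀ (mul_pos hcpos hm)] at hgt
          linarith
      _ = ENNReal.ofReal c * ENNReal.ofReal (m * ‖u‖) := ENNReal.ofReal_mul hcpos.le
      _ ≤ ENNReal.ofReal c * ∫⁻ p, ‖⟪u, p.1⟫‖ₑ ∂D := by gcongr; exact hcoer u hu
      _ ≤ noisyRisk φ η D u := noisyRisk_lower_bound hφ hη D hlab u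
end

section
/- Let D be a probability distribution on ℝ^d × {-1,1} with E_{(x,y)~D}[‖x‖] < ∞ and let η ∈ (0,1/2). Then for every w ∈ ℝ^d, the noisy unhinged risk is an affine function of the clean unhinged risk with slope 1 − 2η: E_{(x,y)~D̄_η}[φ*(y (w·x))] = (1 − 2η) · E_{(x,y)~D}[φ*(y (w·x))] + 2η, where φ*(z) = 1 − z is the unhinged loss. -/
/-!
The unhinged loss is affine, so `(1-η)(1-z) + η(1+z) = (1-2η)(1-z) + 2η` holds pointwise with
`z = y (w·x)`; integrating against the probability measure `D` gives the claim. Linearity of the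
integral needs `y (w·x)` integrable: labels are `±1` almost surely, so by Cauchy-Schwarz it is
dominated by `‖w‖ ‖x‖`.
-/

open MeasureTheory Filter Metric
open scoped RealInnerProductSpace ENNReal

/-- The unhinged loss `φ*(z) = 1 - z`. -/
def unhinged (z : ℝ) : ℝ := 1 - z

/-- The clean unhinged risk `E_{(x,y)~D}[φ*(y (v·x))]`. -/
noncomputable def cleanURisk {d : ℕ} (D : Measure (EuclideanSpace ℝ (Fin d) × ℝ))
    (v : EuclideanSpace ℝ (Fin d)) : ℝ :=
  ∫ p, unhinged (p.2 * ⟪v, p.1⟫) ∂D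

/-- The noisy unhinged risk `E_{(x,y)~D̄_η}[φ*(y (v·x))]`, where `D̄_η` is the `η`-RCN corrupted
version of `D`: `E_{D̄_η}[f(x,y)] = E_{(x,y)~D}[(1-η) f(x,y) + η f(x,-y)]`. -/
noncomputable def noisyURisk {d : ℕ} (η : ℝ) (D : Measure (EuclideanSpace ℝ (Fin d) × ℝ))
    (v : EuclideanSpace ℝ (Fin d)) : ℝ :=
  ∫ p, ((1 - η) * unhinged (p.2 * ⟪v, p.1⟫) + η * unhinged (-p.2 * ⟪v, p.1⟫)) ∂D

/-- The noisy unhinged risk is an affine function of the clean unhinged risk with slope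
`1 - 2η`: `E_{D̄_η}[φ*(y (w·x))] = (1-2η) E_D[φ*(y (w·x))] + 2η`. -/
theorem noisyURisk_eq_affine {d : ℕ}
    (D : Measure (EuclideanSpace ℝ (Fin d) × ℝ)) [IsProbabilityMeasure D]
    (hlab : ∀ᵐ p ∂D, p.2 = 1 ∨ p.2 = -1)
    (hint : Integrable (fun p : EuclideanSpace ℝ (Fin d) × ℝ => ‖p.1‖) D)
    (η : ℝ) (hη : η ∈ Set.Ioo (0 : ℝ) (1/2)) :
    ∀ w : EuclideanSpace ℝ (Fin d),
      noisyURisk η D w = (1 - 2 * η) * cleanURisk D w + 2 * η := by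
  intro w
  have hm : Integrable (fun p : EuclideanSpace ℝ (Fin d) × ℝ => p.2 * ⟪w, p.1⟫) D := by
    refine (hint.const_mul ‖w‖).mono' (by fun_prop) ?_
    filter_upwards [hlab] with p hp
    have hy : ‖p.2‖ = 1 := by rcases hp with h | h <;> simp [h]
    rw [norm_mul, hy, one_mul]
    exact norm_inner_le_norm w p.1
  have hu : Integrable (fun p : EuclideanSpace ℝ (Fin d) × ℝ => unhinged (p.2 * ⟪w, p.1⟫)) D :=
    (integrable_const 1).sub hm
  have hpt : ∀ p : EuclideanSpace ℝ (Fin d) × ℝ,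
      (1 - η) * unhinged (p.2 * ⟪w, p.1⟫) + η * unhinged (-p.2 * ⟪w, p.1⟫)
        = (1 - 2 * η) * unhinged (p.2 * ⟪w, p.1⟫) + 2 * η := by
    intro p
    unfold unhinged
    ring
  unfold noisyURisk cleanURisk
  simp_rw [hpt]
  rw [integral_add (hu.const_mul _) (integrable_const _), integral_const_mul]
  simp
end

section
/- Let D be a probability distribution on ℝ^d × {-1,1} with E_{(x,y)~D}[‖x‖] < ∞, let η ∈ (0,1/2), and let r > 0. Then a vector v with ‖v‖ ≤ r minimizes the clean unhinged risk E_{(x,y)~D}[φ*(y (v·x))] over the closed Euclidean ball of radius r if and only if it minimizes the noisy unhinged risk E_{(x,y)~D̄_η}[φ*(y (v·x))] over that ball; i.e., the two sets of constrained minimizers coincide. -/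
/-!
Since `(1 - η) φ*(z) + η φ*(-z) = 2η + (1 - 2η) φ*(z)` pointwise, the noisy risk is the image of the
clean risk under `t ↦ 2η + (1 - 2η) t` (`noisyURisk_eq`), which is strictly increasing when
`η < 1/2`. Such a map preserves and reflects minimizers. The finite first moment makes all the
integrals converge, so that they can be split.
-/

open MeasureTheory Filter Metric
open scoped RealInnerProductSpace ENNReal

lemma integrable_unhinged {d : ℕ}
    (D : Measure (EuclideanSpace ℝ (Fin d) × ℝ)) [IsProbabilityMeasure D]
    (hlab : ∀ᵐ p ∂D, p.2 = 1 ∨ p.2 = -1)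
    (hint : Integrable (fun p : EuclideanSpace ℝ (Fin d) × ℝ => ‖p.1‖) D)
    (v : EuclideanSpace ℝ (Fin d)) :
    Integrable (fun p : EuclideanSpace ℝ (Fin d) × ℝ => unhinged (p.2 * ⟪v, p.1⟫)) D := by
  have h : Integrable (fun p : EuclideanSpace ℝ (Fin d) × ℝ => p.2 * ⟪v, p.1⟫) D := by
    refine (hint.const_mul ‖v‖).mono' (Continuous.aestronglyMeasurable (by fun_prop)) ?_
    filter_upwards [hlab] with p hp
    have hy : |p.2| = 1 := by rcases hp with hp | hp <;> simp [hp]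
    rw [Real.norm_eq_abs, abs_mul, hy, one_mul]
    exact abs_real_inner_le_norm v p.1
  exact (integrable_const (1 : ℝ)).sub h

lemma noisyURisk_eq {d : ℕ}
    (D : Measure (EuclideanSpace ℝ (Fin d) × ℝ)) [IsProbabilityMeasure D]
    (hlab : ∀ᵐ p ∂D, p.2 = 1 ∨ p.2 = -1)
    (hint : Integrable (fun p : EuclideanSpace ℝ (Fin d) × ℝ => ‖p.1‖) D)
    (η : ℝ) (v : EuclideanSpace ℝ (Fin d)) :
    noisyURisk η D v = 2 * η + (1 - 2 * η) * cleanURisk D v := by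
  have h : ∀ p : EuclideanSpace ℝ (Fin d) × ℝ,
      (1 - η) * unhinged (p.2 * ⟪v, p.1⟫) + η * unhinged (-p.2 * ⟪v, p.1⟫)
        = 2 * η + (1 - 2 * η) * unhinged (p.2 * ⟪v, p.1⟫) := by
    intro p
    simp only [unhinged]
    ring
  unfold noisyURisk cleanURisk
  simp_rw [h]
  rw [integral_add (integrable_const _) ((integrable_unhinged D hlab hint v).const_mul _),
    integral_const, integral_const_mul]
  simp

/-- A vector `v` with `‖v‖ ≤ r` minimizes the clean unhinged risk over the closed ball of
radius `r` iff it minimizes the noisy unhinged risk over that ball. -/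
theorem unhinged_min_iff {d : ℕ}
    (D : Measure (EuclideanSpace ℝ (Fin d) × ℝ)) [IsProbabilityMeasure D]
    (hlab : ∀ᵐ p ∂D, p.2 = 1 ∨ p.2 = -1)
    (hint : Integrable (fun p : EuclideanSpace ℝ (Fin d) × ℝ => ‖p.1‖) D)
    (η : ℝ) (hη : η ∈ Set.Ioo (0 : ℝ) (1/2)) (r : ℝ) (hr : 0 < r)
    (v : EuclideanSpace ℝ (Fin d)) (hv : v ∈ closedBall (0 : EuclideanSpace ℝ (Fin d)) r) :
    IsMinOn (cleanURisk D) (closedBall (0 : EuclideanSpace ℝ (Fin d)) r) v ↔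
      IsMinOn (noisyURisk η D) (closedBall (0 : EuclideanSpace ℝ (Fin d)) r) v := by
  have hpos : 0 < 1 - 2 * η := by linarith [hη.2]
  simp only [isMinOn_iff, noisyURisk_eq D hlab hint, add_le_add_iff_left,
    mul_le_mul_iff_right₀ hpos]
end
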